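/- Let 𝔐 be a Γ-ring satisfying conditions (i)–(iv), let k ≥ 1 be an integer, let f : 𝔐 × Γ × 𝔐 → 𝔐 satisfy conditions (v)–(vii), fix an index 1 ∈ Λ with e₁ := e_1 and γ₁ := γ_1, and define the Peirce components 𝔐_{ij} as below. Then for all i, j, k ∈ {1, 2} with j ≠ k, all x ∈ 𝔐_{ii}, all y ∈ 𝔐_{jk} and all γ ∈ Γ, one has f(x, γ, y) = 0 and f(y, γ, x) = 0. -/

import Mathlib

/-!
Write `k = n + 1`, `e = e₁`, `g = γ₁`. A left multiplication `u₁γ₁⋯u_kγ_k` is `p δ ·` with `p` a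
product of `n + 1` factors (`GammaRing.prodF_snoc`), and a right multiplication is `· δ p` with such
a `p`; so conditions (vi) and (vii) say that `f` commutes with these operators. The element `e` is
such a product by idempotency.

Suppose `x g e = 0` and `y g e = y`, and let `z = f(x, γ, y)`. Then `z g e = f(0, γ, y) = 0`, so
`z = F'(z, g)`, and condition (i) turns `z δ p = F'(z, g) δ p` into `z g q` for another product `q`
of the same length (`GammaRing.IsProd.exists_right`). But `y g q = F'(y, g) δ p = 0`, so
`z δ p = f(x g q, γ, y g q) = 0` for all `δ, p`, and (ii) gives `z = 0`. The argument on the other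
side, with (iii) in place of (ii), treats `e g x = 0`, `e g y = y`. For `x ∈ 𝔐_{ii}` and
`y ∈ 𝔐_{jl}` with `j ≠ l`, either `i ≠ j` or `i ≠ l`, so that one of the two applies, possibly with
the roles of `x` and `y` exchanged.
-/

/-- A `Γ`-ring in the sense of Barnes: abelian groups `M` and `Γ` with a triple product
`M → Γ → M → M` that is additive in each variable and associative. -/
structure GammaRing (M : Type*) (Γ : Type*) [AddCommGroup M] [AddCommGroup Γ] where
  tri : M → Γ → M → M
  add_left : ∀ x y α z, tri (x + y) α z = tri x α z + tri y α z
  add_right : ∀ x α y z, tri x α (y + z) = tri x α y + tri x α z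
  add_mid : ∀ x α β y, tri x (α + β) y = tri x α y + tri x β y
  assoc : ∀ x α y β z, tri (tri x α y) β z = tri x α (tri y β z)

namespace GammaRing

variable {M Γ : Type*} [AddCommGroup M] [AddCommGroup Γ]

/-- The product `x₀ γ₀ x₁ γ₁ ⋯ γ_{k-1} x_k` (right associated). -/
def prodF (G : GammaRing M Γ) : (k : ℕ) → (Fin (k + 1) → M) → (Fin k → Γ) → M
  | 0, x, _ => x 0
  | k + 1, x, γ => G.tri (x 0) (γ 0) (G.prodF k (fun i => x i.succ) (fun i => γ i.succ))

end GammaRing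

/-- The Peirce component `𝔐_{ij}` (indices `0, 1` standing for `1, 2`) relative to the
`γ₁`-idempotent `e₁`. -/
def GammaRing.peirce {M Γ : Type*} [AddCommGroup M] [AddCommGroup Γ] (G : GammaRing M Γ)
    (e₁ : M) (γ₁ : Γ) (i j : Fin 2) : Set M :=
  {x | G.tri e₁ γ₁ x = (if i = 0 then x else 0) ∧ G.tri x γ₁ e₁ = (if j = 0 then x else 0)}

namespace GammaRing

variable {M Γ : Type*} [AddCommGroup M] [AddCommGroup Γ]

theorem tri_zero (G : GammaRing M Γ) (x : M) (α : Γ) : G.tri x α 0 = 0 := by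
  simpa using G.add_right x α 0 0

theorem zero_tri (G : GammaRing M Γ) (α : Γ) (x : M) : G.tri 0 α x = 0 := by
  simpa using G.add_left 0 0 α x

theorem tail_snoc {A : Type*} {n : ℕ} (u : Fin (n + 1) → A) (t : A) :
    (fun i : Fin (n + 1) => (Fin.snoc u t : Fin (n + 2) → A) i.succ) =
      Fin.snoc (fun i => u i.succ) t := by
  funext i
  induction i using Fin.lastCases with
  | last => rw [Fin.snoc_last, Fin.succ_last, Fin.snoc_last]
  | cast i => rw [Fin.snoc_castSucc, Fin.succ_castSucc, Fin.snoc_castSucc]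

/-- Reassociation isolating the last factor of a product. -/
theorem prodF_snoc (G : GammaRing M Γ) (n : ℕ) (u : Fin (n + 1) → M) (δ : Fin n → Γ) (β : Γ)
    (t : M) :
    G.prodF (n + 1) (Fin.snoc u t : Fin (n + 2) → M) (Fin.snoc δ β : Fin (n + 1) → Γ) =
      G.tri (G.prodF n u δ) β t := by
  induction n with
  | zero => rfl
  | succ n ih =>
    have h := ih (fun i => u i.succ) (fun i => δ i.succ)
    have hu : (fun i : Fin (n + 2) => (Fin.snoc u t : Fin (n + 3) → M) i.succ) =
        Fin.snoc (fun i => u i.succ) t := tail_snoc u t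
    have hδ : (fun i : Fin (n + 1) => (Fin.snoc δ β : Fin (n + 2) → Γ) i.succ) =
        Fin.snoc (fun i => δ i.succ) β := tail_snoc δ β
    rw [prodF, hu, hδ, h, prodF, G.assoc]
    rfl

/-- `p` is a product `u₀ γ₀ u₁ ⋯ γ_{n-1} u_n` of `n + 1` factors. -/
def IsProd (G : GammaRing M Γ) (n : ℕ) (p : M) : Prop :=
  ∃ u δ, G.prodF n u δ = p

theorem isProd_zero (G : GammaRing M Γ) (p : M) : G.IsProd 0 p :=
  ⟨fun _ => p, Fin.elim0, rfl⟩

theorem isProd_succ (G : GammaRing M Γ) (n : ℕ) (p : M) :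
    G.IsProd (n + 1) p ↔ ∃ u β q, G.IsProd n q ∧ G.tri u β q = p := by
  constructor
  · rintro ⟨u, δ, h⟩
    exact ⟨u 0, δ 0, _, ⟨_, _, rfl⟩, h⟩
  · rintro ⟨v, β, q, ⟨u, δ, rfl⟩, rfl⟩
    exact ⟨Fin.cons v u, Fin.cons β δ, rfl⟩

/-- An element absorbed on the left by some `u β` is a product of any length. -/
theorem isProd_of_absorb (G : GammaRing M Γ) {u p : M} {β : Γ} (h : G.tri u β p = p) (n : ℕ) :
    G.IsProd n p := by
  induction n with
  | zero => exact G.isProd_zero p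
  | succ n ih => exact (G.isProd_succ n p).2 ⟨u, β, p, ih, h⟩

/-- Replacing the first factor `u` of `p` by `F(δ, u)` absorbs the operator `F'(·, g)`. -/
theorem IsProd.exists_right {G : GammaRing M Γ} {F : Γ → M → M} {F' : M → Γ → M}
    (hF : ∀ x y β γ, G.tri (F' x β) γ y = G.tri x β (F γ y)) {n : ℕ} {p : M}
    (hp : G.IsProd n p) (g δ : Γ) :
    ∃ q, G.IsProd n q ∧ ∀ t, G.tri t g q = G.tri (F' t g) δ p := by
  cases n with
  | zero => exact ⟨F δ p, G.isProd_zero _, fun t => (hF t p g δ).symm⟩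
  | succ n =>
    obtain ⟨u, β, p', hp', rfl⟩ := (G.isProd_succ n p).1 hp
    refine ⟨G.tri (F δ u) β p', (G.isProd_succ n _).2 ⟨_, _, _, hp', rfl⟩, fun t => ?_⟩
    rw [← G.assoc, ← hF, G.assoc]

/-- Replacing the last factor `u` of `p` by `F'(u, δ)` absorbs the operator `F(g, ·)`. -/
theorem IsProd.exists_left {G : GammaRing M Γ} {F : Γ → M → M} {F' : M → Γ → M}
    (hF : ∀ x y β γ, G.tri (F' x β) γ y = G.tri x β (F γ y)) {n : ℕ} {p : M}
    (hp : G.IsProd n p) (g δ : Γ) :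
    ∃ q, G.IsProd n q ∧ ∀ t, G.tri q g t = G.tri p δ (F g t) := by
  induction n generalizing p with
  | zero => exact ⟨F' p δ, G.isProd_zero _, fun t => hF p t δ g⟩
  | succ n ih =>
    obtain ⟨u, β, p', hp', rfl⟩ := (G.isProd_succ n p).1 hp
    obtain ⟨q, hq, h⟩ := ih hp'
    refine ⟨G.tri u β q, (G.isProd_succ n _).2 ⟨_, _, _, hq, rfl⟩, fun t => ?_⟩
    rw [G.assoc, h, G.assoc]

/-- Condition (ii), iterated. -/
theorem eq_zero_of_tri_isProd (G : GammaRing M Γ)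
    (hii : ∀ x : M, (∀ (γ : Γ) (m : M), G.tri x γ m = 0) → x = 0) (n : ℕ) {z : M}
    (h : ∀ p, G.IsProd n p → ∀ δ, G.tri z δ p = 0) : z = 0 := by
  induction n generalizing z with
  | zero => exact hii z fun γ m => h m (G.isProd_zero m) γ
  | succ n ih =>
    refine hii z fun γ m => ih fun p hp δ => ?_
    rw [G.assoc]
    exact h _ ((G.isProd_succ n _).2 ⟨m, δ, p, hp, rfl⟩) γ

end GammaRing

/-- Claim 2: `f(x_{ii}, γ, x_{jk}) = 0 = f(x_{jk}, γ, x_{ii})` for `j ≠ k`. -/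
theorem gammaRing_f_claim2
    {M Γ Λ : Type*} [AddCommGroup M] [AddCommGroup Γ] [Nonempty Λ]
    (G : GammaRing M Γ)
    (e : Λ → M) (γs : Λ → Γ)
    (hidem : ∀ a, G.tri (e a) (γs a) (e a) = e a)
    -- condition (i)
    (F : Λ → Γ → M → M) (F' : Λ → M → Γ → M)
    (hFadd : ∀ a γ x y, F a γ (x + y) = F a γ x + F a γ y)
    (hF'add : ∀ a x y γ, F' a (x + y) γ = F' a x γ + F' a y γ)
    (hFγ : ∀ a x, F a (γs a) x = x - G.tri (e a) (γs a) x)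
    (hF'γ : ∀ a x, F' a x (γs a) = x - G.tri x (γs a) (e a))
    (hFmid : ∀ a x y β γ, G.tri (F' a x β) γ y = G.tri x β (F a γ y))
    -- condition (ii)
    (hii : ∀ x : M, (∀ (γ : Γ) (m : M), G.tri x γ m = 0) → x = 0)
    -- condition (iii)
    (hiii : ∀ x : M, (∀ (a : Λ) (γ δ : Γ) (m : M), G.tri (G.tri (e a) γ m) δ x = 0) → x = 0)
    -- condition (iv)
    (hiv : ∀ (a : Λ) (x : M),
      (∀ (γ δ : Γ) (m : M),
        F' a (G.tri (G.tri (G.tri (e a) (γs a) x) (γs a) (e a)) γ m) δ = 0) →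
      G.tri (G.tri (e a) (γs a) x) (γs a) (e a) = 0)
    (k : ℕ) (hk : 1 ≤ k)
    (f : M → Γ → M → M)
    -- condition (v)
    (hv : ∀ (x : M) (γ : Γ), f x γ 0 = 0 ∧ f 0 γ x = 0)
    -- condition (vi): u₁γ₁u₂⋯γ_{k-1}u_kγ_k f(x,γ,y) = f(u₁γ₁⋯u_kγ_k x, γ, u₁γ₁⋯u_kγ_k y)
    (hvi : ∀ (u : Fin k → M) (δ : Fin k → Γ) (x : M) (γ : Γ) (y : M),
      G.prodF k (Fin.snoc u (f x γ y)) δ =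
        f (G.prodF k (Fin.snoc u x) δ) γ (G.prodF k (Fin.snoc u y) δ))
    -- condition (vii): f(x,γ,y)γ₁u₁⋯γ_ku_k = f(xγ₁u₁⋯γ_ku_k, γ, yγ₁u₁⋯γ_ku_k)
    (hvii : ∀ (u : Fin k → M) (δ : Fin k → Γ) (x : M) (γ : Γ) (y : M),
      G.prodF k (Fin.cons (f x γ y) u) δ =
        f (G.prodF k (Fin.cons x u) δ) γ (G.prodF k (Fin.cons y u) δ))
    (a₁ : Λ) :
    ∀ (i j l : Fin 2), j ≠ l →
      ∀ x ∈ G.peirce (e a₁) (γs a₁) i i, ∀ y ∈ G.peirce (e a₁) (γs a₁) j l, ∀ γ : Γ,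
        f x γ y = 0 ∧ f y γ x = 0 := by
  obtain ⟨n, rfl⟩ : ∃ n, k = n + 1 := ⟨k - 1, by omega⟩
  have hleft : ∀ p, G.IsProd n p → ∀ δ x γ y,
      G.tri p δ (f x γ y) = f (G.tri p δ x) γ (G.tri p δ y) := by
    rintro _ ⟨u, δ', rfl⟩ δ x γ y
    have h := hvi u (Fin.snoc δ' δ : Fin (n + 1) → Γ) x γ y
    rwa [G.prodF_snoc, G.prodF_snoc, G.prodF_snoc] at h
  have hright : ∀ p, G.IsProd n p → ∀ δ x γ y,
      G.tri (f x γ y) δ p = f (G.tri x δ p) γ (G.tri y δ p) := by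
    rintro _ ⟨u, δ', rfl⟩ δ x γ y
    exact hvii u (Fin.cons δ δ' : Fin (n + 1) → Γ) x γ y
  have he : G.IsProd n (e a₁) := G.isProd_of_absorb (hidem a₁) n
  have hf0 : ∀ x γ, f x γ 0 = 0 := fun x γ => (hv x γ).1
  have h0f : ∀ x γ, f 0 γ x = 0 := fun x γ => (hv x γ).2
  have keyR : ∀ x y γ, G.tri x (γs a₁) (e a₁) = 0 → G.tri y (γs a₁) (e a₁) = y →
      f x γ y = 0 ∧ f y γ x = 0 := by
    intro x y γ hx hy
    have aux : ∀ z, G.tri z (γs a₁) (e a₁) = 0 →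
        (∀ q, G.IsProd n q → G.tri y (γs a₁) q = 0 → G.tri z (γs a₁) q = 0) → z = 0 := by
      intro z hz hq0
      refine G.eq_zero_of_tri_isProd hii n fun p hp δ => ?_
      obtain ⟨q, hq, h⟩ := hp.exists_right (hFmid a₁) (γs a₁) δ
      have h1 := hq0 q hq (by rw [h, hF'γ, hy, sub_self, G.zero_tri])
      rwa [h, hF'γ, hz, sub_zero] at h1
    constructor <;> apply aux
    · rw [hright _ he, hx, h0f]
    · intro q hq h
      rw [hright _ hq, h, hf0]
    · rw [hright _ he, hx, hf0]
    · intro q hq h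
      rw [hright _ hq, h, h0f]
  have keyL : ∀ x y γ, G.tri (e a₁) (γs a₁) x = 0 → G.tri (e a₁) (γs a₁) y = y →
      f x γ y = 0 ∧ f y γ x = 0 := by
    intro x y γ hx hy
    have aux : ∀ z, G.tri (e a₁) (γs a₁) z = 0 →
        (∀ q, G.IsProd n q → G.tri q (γs a₁) y = 0 → G.tri q (γs a₁) z = 0) → z = 0 := by
      intro z hz hq0
      refine hiii z fun a β δ m => ?_
      have hp : G.IsProd n (G.tri (e a) β m) :=
        G.isProd_of_absorb (u := e a) (β := γs a) (by rw [← G.assoc, hidem]) n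
      obtain ⟨q, hq, h⟩ := hp.exists_left (hFmid a₁) (γs a₁) δ
      have h1 := hq0 q hq (by rw [h, hFγ, hy, sub_self, G.tri_zero])
      rwa [h, hFγ, hz, sub_zero] at h1
    constructor <;> apply aux
    · rw [hleft _ he, hx, h0f]
    · intro q hq h
      rw [hleft _ hq, h, hf0]
    · rw [hleft _ he, hx, hf0]
    · intro q hq h
      rw [hleft _ hq, h, h0f]
  rintro i j l hjl x ⟨hx1, hx2⟩ y ⟨hy1, hy2⟩ γ
  by_cases hi : i = 0 <;> by_cases hj : j = 0 <;> by_cases hl : l = 0 <;>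
    simp only [hi, hj, hl, if_true, if_false] at hx1 hx2 hy1 hy2
  · omega
  · exact (keyR y x γ hy2 hx2).symm
  · exact (keyL y x γ hy1 hx1).symm
  · omega
  · omega
  · exact keyL x y γ hx1 hy1
  · exact keyR x y γ hx2 hy2
  · omega
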